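/- arXiv:1902.03909 — 2 statements merged into one kernel-verified Lean document; each statement's English description precedes it below -/
import Mathlib

section
/- Let N, N_L, N_M be positive integers and let z'_{1,1}, …, z'_{1,N_L}, z'_{2,1}, …, z'_{2,N_M} be linearly independent vectors in ℂ^N. Let A_1, …, A_{N_L}, B_1, …, B_{N_M} be finite subsets of ℂ, each of cardinality at least 2, and let Z be the associated signal alphabet. Then: (i) every vector in {z'_{1,1}, …, z'_{1,N_L}, z'_{2,1}, …, z'_{2,N_M}} covers Z; and (ii) every vector of the form Σ_{j=1}^{N_L} c_{1,j} z'_{1,j} + Σ_{k=1}^{N_M} c_{2,k} z'_{2,k}, in which at least two of the complex coefficients c_{1,1}, …, c_{1,N_L}, c_{2,1}, …, c_{2,N_M} are nonzero, does not cover Z. -/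
/-!
Indexing all the vectors by one finite type, `Z` is the image of the box `∏ i, S i` under
`s ↦ ∑ i, s i • u i`, which is injective by linear independence. Changing one coordinate of a point
of the box to another letter of its alphabet shows that each `u i` covers `Z`.

Suppose now that `c i` and `c i'` are nonzero with `i ≠ i'`. The additive group `ℂ` carries a
translation-invariant linear order, the lexicographic one. Take a point of the box whose coordinate
`i` maximizes `s / c i` over `S i` and whose coordinate `i'` minimizes `s / c i'` over `S i'`.
Moving from this point along `t • ∑ i, c i • u i` within `Z` shifts both quotients by the same `t`,
so `t` is both nonpositive and nonnegative in that order, whence `t = 0`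
(`exists_opposite_extremes`).
-/

open scoped BigOperators

/-- A nonzero vector `z` covers the pair of distinct points `v, v'` if `v - v'`
is a nonzero complex scalar multiple of `z`. -/
def CoversPair {N : ℕ} (z v v' : Fin N → ℂ) : Prop :=
  v ≠ v' ∧ ∃ c : ℂ, c ≠ 0 ∧ v - v' = c • z

/-- A nonzero vector `z` covers a finite set `Zs` if for every point `v` of `Zs`
there is another point `v'` of `Zs` such that `z` covers the pair `v, v'`. -/
def Covers {N : ℕ} (z : Fin N → ℂ) (Zs : Set (Fin N → ℂ)) : Prop :=
  ∀ v ∈ Zs, ∃ v' ∈ Zs, CoversPair z v v'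

/-- The set of all combinations `∑ i, s i • u i` with `s i` in the alphabet `S i`. -/
def boxAlphabet {ι : Type*} [Fintype ι] {N : ℕ} (u : ι → Fin N → ℂ) (S : ι → Finset ℂ) :
    Set (Fin N → ℂ) :=
  {x | ∃ s : ι → ℂ, (∀ i, s i ∈ S i) ∧ x = ∑ i, s i • u i}

/-- For `p, q ≠ 0`, some `(x, y)` in `S × T` is the only point of `S × T` on the complex line through
it with direction `(p, q)`. -/
theorem exists_opposite_extremes (S T : Finset ℂ) (hS : S.Nonempty) (hT : T.Nonempty)
    (p q : ℂ) (hp : p ≠ 0) (hq : q ≠ 0) :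
    ∃ x ∈ S, ∃ y ∈ T, ∀ t : ℂ, x - t * p ∈ S → y - t * q ∈ T → t = 0 := by
  obtain ⟨x, hx, hxm⟩ := S.exists_max_image
    (fun s => toLex ((s / p).re, (s / p).im)) hS
  obtain ⟨y, hy, hym⟩ := T.exists_min_image
    (fun s => toLex ((s / q).re, (s / q).im)) hT
  refine ⟨x, hx, y, hy, fun t h1 h2 => ?_⟩
  have e1 : (x - t * p) / p = x / p - t := by field_simp
  have e2 : (y - t * q) / q = y / q - t := by field_simp
  have k1 := hxm _ h1
  have k2 := hym _ h2
  simp only [e1, e2, Prod.Lex.toLex_le_toLex, Complex.sub_re, Complex.sub_im] at k1 k2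
  apply Complex.ext <;> simp only [Complex.zero_re, Complex.zero_im] <;>
    rcases k1 with k1 | ⟨k1, k1'⟩ <;> rcases k2 with k2 | ⟨k2, k2'⟩ <;> linarith

theorem covers_boxAlphabet {ι : Type*} [Fintype ι] {N : ℕ} (u : ι → Fin N → ℂ)
    (hu : LinearIndependent ℂ u) (S : ι → Finset ℂ) (hS : ∀ i, 2 ≤ (S i).card) (i : ι) :
    Covers (u i) (boxAlphabet u S) := by
  classical
  rintro _ ⟨s, hs, rfl⟩
  obtain ⟨r, hr, hne⟩ := Finset.exists_mem_ne (hS i) (s i)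
  have hc : s i - r ≠ 0 := sub_ne_zero.mpr hne.symm
  have key : ∑ j, s j • u j - ∑ j, Function.update s i r j • u j = (s i - r) • u i := by
    rw [← Finset.sum_sub_distrib, Finset.sum_eq_single i]
    · simp [sub_smul]
    · intro j _ hj
      simp [hj]
    · simp
  refine ⟨∑ j, Function.update s i r j • u j, ⟨_, fun j => ?_, rfl⟩, ?_, s i - r, hc, key⟩
  · by_cases hj : j = i
    · subst hj
      simpa using hr
    · simpa [hj] using hs j
  · intro h
    rw [h, sub_self] at key
    exact smul_ne_zero hc (hu.ne_zero i) key.symm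

theorem not_covers_boxAlphabet {ι : Type*} [Fintype ι] {N : ℕ} (u : ι → Fin N → ℂ)
    (hu : LinearIndependent ℂ u) (S : ι → Finset ℂ) (hS : ∀ i, (S i).Nonempty) (c : ι → ℂ)
    {i i' : ι} (hii : i ≠ i') (hi : c i ≠ 0) (hi' : c i' ≠ 0) :
    ¬ Covers (∑ j, c j • u j) (boxAlphabet u S) := by
  classical
  intro hcov
  obtain ⟨x, hx, y, hy, hxy⟩ :=
    exists_opposite_extremes (S i) (S i') (hS i) (hS i') (c i) (c i') hi hi'
  choose s₀ hs₀ using hS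
  let s : ι → ℂ := Function.update (Function.update s₀ i x) i' y
  have hsi : s i = x := by simp [s, hii]
  have hsi' : s i' = y := by simp [s]
  have hs : ∀ j, s j ∈ S j := by
    intro j
    by_cases h' : j = i'
    · subst h'
      rwa [hsi']
    · by_cases h : j = i
      · subst h
        rwa [hsi]
      · simpa [s, h, h'] using hs₀ j
  obtain ⟨_, ⟨r, hr, rfl⟩, _, t, ht, heq⟩ := hcov _ ⟨s, hs, rfl⟩
  have hz : ∑ j, (s j - r j - t * c j) • u j = 0 := by
    simp only [sub_smul, mul_smul, Finset.sum_sub_distrib, ← Finset.smul_sum]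
    rw [heq, sub_self]
  have hcoef : ∀ j, s j - t * c j = r j := fun j => by
    linear_combination Fintype.linearIndependent_iff.mp hu _ hz j
  apply ht
  apply hxy
  · rw [← hsi, hcoef]
    exact hr i
  · rw [← hsi', hcoef]
    exact hr i'

theorem stmt0 (N NL NM : ℕ) (hN : 1 ≤ N) (hNL : 1 ≤ NL) (hNM : 1 ≤ NM)
    (z1 : Fin NL → Fin N → ℂ) (z2 : Fin NM → Fin N → ℂ)
    (hli : LinearIndependent ℂ (Sum.elim z1 z2))
    (A : Fin NL → Finset ℂ) (B : Fin NM → Finset ℂ)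
    (hA : ∀ j, 2 ≤ (A j).card) (hB : ∀ k, 2 ≤ (B k).card)
    (Z : Set (Fin N → ℂ))
    (hZ : Z = {x | ∃ a : Fin NL → ℂ, ∃ b : Fin NM → ℂ,
      (∀ j, a j ∈ A j) ∧ (∀ k, b k ∈ B k) ∧
      x = (∑ j, a j • z1 j) + ∑ k, b k • z2 k}) :
    ((∀ j, Covers (z1 j) Z) ∧ (∀ k, Covers (z2 k) Z)) ∧
    (∀ (c1 : Fin NL → ℂ) (c2 : Fin NM → ℂ),
      (∃ i i' : Fin NL ⊕ Fin NM, i ≠ i' ∧ Sum.elim c1 c2 i ≠ 0 ∧ Sum.elim c1 c2 i' ≠ 0) →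
      ¬ Covers ((∑ j, c1 j • z1 j) + ∑ k, c2 k • z2 k) Z) := by
  have hZ' : Z = boxAlphabet (Sum.elim z1 z2) (Sum.elim A B) := by
    subst hZ
    ext x
    constructor
    · rintro ⟨a, b, ha, hb, rfl⟩
      exact ⟨Sum.elim a b, by rintro (j | k) <;> simp [ha, hb], by simp⟩
    · rintro ⟨s, hs, rfl⟩
      exact ⟨fun j => s (.inl j), fun k => s (.inr k), fun j => hs (.inl j),
        fun k => hs (.inr k), by simp⟩
  have hS : ∀ i, 2 ≤ (Sum.elim A B i).card := by
    rintro (j | k)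
    · exact hA j
    · exact hB k
  rw [hZ']
  refine ⟨⟨fun j => covers_boxAlphabet _ hli _ hS (.inl j),
    fun k => covers_boxAlphabet _ hli _ hS (.inr k)⟩, ?_⟩
  rintro c1 c2 ⟨i, i', hii, hi, hi'⟩
  have h := not_covers_boxAlphabet _ hli (Sum.elim A B)
    (fun i => Finset.card_pos.mp (zero_lt_two.trans_le (hS i))) (Sum.elim c1 c2) hii hi hi'
  simpa using h
end

section
/- Let A and B be finite nonempty subsets of ℂ and let λ ∈ ℂ be nonzero. Let â ∈ A be an element minimizing Re(λa) over a ∈ A and, among all elements attaining this minimum, minimizing Im(λa); let b̂ ∈ B be an element maximizing Re(b) over b ∈ B and, among all elements attaining this maximum, maximizing Im(b). Then for every a ∈ A and b ∈ B with (a, b) ≠ (â, b̂), one has b̂ − b ≠ λ(â − a). -/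
/-!
In the lexicographic order on `ℂ` (real part first, then imaginary part), `bhat - b` is nonnegative
and `lam * (ahat - a)` is nonpositive. If they are equal, both vanish, so `b = bhat` and, since
`lam ≠ 0`, also `a = ahat`.
-/

theorem stmt1 (A B : Finset ℂ) (hA : A.Nonempty) (hB : B.Nonempty)
    (lam : ℂ) (hlam : lam ≠ 0)
    (ahat : ℂ) (hahat : ahat ∈ A)
    (hminRe : ∀ a ∈ A, (lam * ahat).re ≤ (lam * a).re)
    (hminIm : ∀ a ∈ A, (lam * a).re = (lam * ahat).re → (lam * ahat).im ≤ (lam * a).im)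
    (bhat : ℂ) (hbhat : bhat ∈ B)
    (hmaxRe : ∀ b ∈ B, b.re ≤ bhat.re)
    (hmaxIm : ∀ b ∈ B, b.re = bhat.re → b.im ≤ bhat.im) :
    ∀ a ∈ A, ∀ b ∈ B, (a, b) ≠ (ahat, bhat) → bhat - b ≠ lam * (ahat - a) := by
  intro a ha b hb hne h
  rw [mul_sub] at h
  have hre := congrArg Complex.re h
  have him := congrArg Complex.im h
  rw [Complex.sub_re, Complex.sub_re] at hre
  rw [Complex.sub_im, Complex.sub_im] at him
  have hRa := hminRe a ha
  have hRb := hmaxRe b hb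
  -- The real parts must agree, which makes the tie-breaking hypotheses applicable.
  have hbre : b.re = bhat.re := by linarith
  have hare : (lam * a).re = (lam * ahat).re := by linarith
  have hIa := hminIm a ha hare
  have hIb := hmaxIm b hb hbre
  have hbb : b = bhat := Complex.ext hbre (by linarith)
  have haa : lam * a = lam * ahat := Complex.ext hare (by linarith)
  exact hne (Prod.ext (mul_left_cancel₀ hlam haa) hbb)
end
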